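/- (Cumulants of a product of free variables.) Let (𝒜, 𝔼) be a B-valued probability space and let a, b ∈ 𝒜 be free. Define operator-valued cumulants κ = (κ_n) by 𝔼(a_1 ⋯ a_n) = Σ_{τ ∈ Y_n} κ_τ(a_1, …, a_n), and for c ∈ 𝒜 set k^c_n(x_1, …, x_n) = κ_n(x_1 c, x_2 c, …, x_n c). Then k^{ab} = k^a ⊠ k^b; explicitly, for all n ≥ 1 and x_1, …, x_n ∈ B: k^{ab}_n(x_1, …, x_n) = Σ_{τ ∈ Y_n} (k^a ∪ k^b)_{R(τ)}(x_1, 1, x_2, 1, …, 1, x_n, 1). -/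

import Mathlib

universe u

/-- Planar binary trees. -/
inductive PBTree : Type
  | leaf : PBTree
  | node : PBTree → PBTree → PBTree
deriving DecidableEq

namespace PBTree

/-- Number of internal vertices. -/
def size : PBTree → ℕ
  | .leaf => 0
  | .node l r => l.size + r.size + 1

end PBTree

namespace PBTree

/-- The vertex-doubling map `R : Y → Y`, `R(|) = |`, `R(σ ∨ τ) = (| ∨ R σ) ∨ R τ`. -/
def R : PBTree → PBTree
  | .leaf => .leaf
  | .node σ τ => .node (.node .leaf (R σ)) (R τ)

end PBTree

/-- The finite set `Y_n` of planar binary trees with `n` internal vertices. -/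
def treesOfSize : ℕ → Finset PBTree
  | 0 => {PBTree.leaf}
  | n + 1 => (Finset.range (n + 1)).attach.biUnion fun k =>
      Finset.image₂ PBTree.node (treesOfSize k.1) (treesOfSize (n - k.1))
termination_by n => n
decreasing_by
  · have := Finset.mem_range.mp k.2; omega
  · omega

section TreeEval

variable {A B : Type u} [Ring A] [Ring B]

/-- Apply a series of functions to the entries of a list. -/
def appG (f : ∀ n : ℕ, (Fin n → A) → B) (l : List A) : B := f l.length fun i => l.get i

mutual

/-- The alternating tree evaluation `(f ∪ g)_τ`: the root level uses `g`,
nested levels alternate, and the empty tree evaluates to `1`. -/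
def treeEvalG (smul : B → A → A) (f g : ∀ n : ℕ, (Fin n → A) → B) : PBTree → List A → B
  | .leaf, _ => 1
  | .node σ ρ, x => appG g (argListG smul f g (.node σ ρ) x)
termination_by t _ => (sizeOf t, 1)

/-- The list of top-level arguments in the recursive definition of `(f ∪ g)_τ`. -/
def argListG (smul : B → A → A) (f g : ∀ n : ℕ, (Fin n → A) → B) : PBTree → List A → List A
  | .leaf, _ => []
  | .node σ ρ, x =>
      smul (treeEvalG smul g f σ (x.take σ.size)) (x.getD σ.size 1)
        :: argListG smul f g ρ (x.drop (σ.size + 1))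
termination_by t _ => (sizeOf t, 0)

end

end TreeEval

/-!
Composition of multilinear function series is the sum over all factorizations of a word into
consecutive blocks, and it is associative. The moment–cumulant relation says that the moment series
`m` is `k ∘ (m · I)`, where `I` is the identity series; this determines `k` by `m`.

For free `a` and `b`, the moment of `x₁ a, b, x₂ a, b, …` is expanded over blocks. The last letters
of the blocks are the letters of one cumulant, so they all carry the same colour, which forces the
blocks to be aligned with the pairs `xᵢ a, b`. Hence `m^{ab} = k^b ∘ P`, where `P` is the moment
series of the words `x₁ a b ⋯ xₙ a`. Expanding `P` in the same way and comparing with the recursion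
of the trees `R(τ)` by strong induction on the length gives `P = Q ∘ (m^{ab} · I)`, where `Q` is the
sum of the inner alternating trees. Hence `m^{ab} = (k^b ∘ Q) ∘ (m^{ab} · I)`, and comparing with
`m^{ab} = k^{ab} ∘ (m^{ab} · I)` gives `k^{ab} = k^b ∘ Q = k^a ⊠ k^b`.
-/

namespace OperatorValuedCumulants

section SplitSum

variable {α β β' : Type*} [AddCommMonoid β] [AddCommMonoid β']

/-- The sum of `Φ p q` over all factorizations `l = p ++ q`, empty factors included. -/
def splitSum (l : List α) (Φ : List α → List α → β) : β :=
  ∑ k ∈ Finset.range (l.length + 1), Φ (l.take k) (l.drop k)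

lemma splitSum_nil (Φ : List α → List α → β) : splitSum [] Φ = Φ [] [] := by
  simp [splitSum]

lemma splitSum_cons (x : α) (xs : List α) (Φ : List α → List α → β) :
    splitSum (x :: xs) Φ = Φ [] (x :: xs) + splitSum xs fun p q => Φ (x :: p) q := by
  rw [splitSum, List.length_cons, Finset.sum_range_succ', add_comm]
  rfl

lemma splitSum_congr {l : List α} {Φ Ψ : List α → List α → β}
    (h : ∀ p q, p ++ q = l → Φ p q = Ψ p q) : splitSum l Φ = splitSum l Ψ :=
  Finset.sum_congr rfl fun _ _ => h _ _ (List.take_append_drop _ _)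

lemma splitSum_eq_zero {l : List α} {Φ : List α → List α → β}
    (h : ∀ p q, p ++ q = l → Φ p q = 0) : splitSum l Φ = 0 :=
  Finset.sum_eq_zero fun _ _ => h _ _ (List.take_append_drop _ _)

lemma splitSum_add (l : List α) (Φ Ψ : List α → List α → β) :
    splitSum l (fun p q => Φ p q + Ψ p q) = splitSum l Φ + splitSum l Ψ :=
  Finset.sum_add_distrib

lemma map_splitSum (h : β →+ β') (l : List α) (Φ : List α → List α → β) :
    h (splitSum l Φ) = splitSum l fun p q => h (Φ p q) :=
  map_sum h _ _

lemma splitSum_append_cons (p q : List α) (y : α) (Φ : List α → List α → β) :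
    splitSum (p ++ y :: q) Φ
      = splitSum p (fun s r => Φ s (r ++ y :: q)) + splitSum q fun s r => Φ (p ++ y :: s) r := by
  induction p generalizing Φ with
  | nil => simp only [List.nil_append, splitSum_cons, splitSum_nil]
  | cons x p ih => simp only [List.cons_append, splitSum_cons, ih, add_assoc]

lemma splitSum_assoc (l : List α) (Φ : List α → List α → List α → β) :
    splitSum l (fun p r => splitSum p fun s q => Φ s q r)
      = splitSum l fun s t => splitSum t fun q r => Φ s q r := by
  induction l generalizing Φ with
  | nil => rfl
  | cons x l ih =>
    simp only [splitSum_cons, splitSum_nil, splitSum_add, ih fun s q r => Φ (x :: s) q r, add_assoc]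

lemma splitSum_shift (x : α) (xs : List α) {Φ Ψ : List α → List α → β} (hnil : ∀ p, Ψ p [] = 0)
    (hcons : ∀ p y q, Ψ p (y :: q) = Φ (p ++ [y]) q) :
    splitSum (x :: xs) Ψ = splitSum xs fun s q => Φ (x :: s) q := by
  induction xs generalizing x Φ Ψ with
  | nil => simp [splitSum_cons, splitSum_nil, hnil, hcons]
  | cons y ys ih =>
    have htail := ih y (Φ := fun s q => Φ (x :: s) q) (Ψ := fun s q => Ψ (x :: s) q)
      (fun _ => hnil _) fun _ _ _ => hcons _ _ _
    rw [splitSum_cons, htail, hcons, splitSum_cons]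
    rfl

end SplitSum

@[elab_as_elim]
lemma suffix_induction {α : Type*} {motive : List α → Prop} (nil : motive [])
    (cons : ∀ x xs, (∀ q, q <:+ xs → motive q) → motive (x :: xs)) (l : List α) : motive l := by
  suffices ∀ q, q <:+ l → motive q from this l List.suffix_rfl
  induction l with
  | nil => rintro q hq; rwa [List.suffix_nil.mp hq]
  | cons x xs ih =>
    intro q hq
    rcases List.suffix_cons_iff.mp hq with rfl | hq
    exacts [cons x xs ih, ih q hq]

section BlockSum

variable {α α' γ γ' β β' : Type*} [AddCommMonoid β] [AddCommMonoid β']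

/-- The sum of `F [w s₁, …, w sₖ]` over all factorizations `l = s₁ ++ ⋯ ++ sₖ` into nonempty blocks:
the composition `F ∘ w` of multilinear function series. The value `w []` is never used. -/
def blockSum (w : List α → γ) (F : List γ → β) : List α → β
  | [] => F []
  | x :: xs => ∑ k ∈ Finset.range (xs.length + 1),
      blockSum w (fun t => F (w (x :: xs.take k) :: t)) (xs.drop k)
termination_by l => l.length

lemma blockSum_nil (w : List α → γ) (F : List γ → β) : blockSum w F [] = F [] := by
  rw [blockSum]

lemma blockSum_cons (w : List α → γ) (F : List γ → β) (x : α) (xs : List α) :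
    blockSum w F (x :: xs)
      = splitSum xs fun s q => blockSum w (fun t => F (w (x :: s) :: t)) q := by
  rw [blockSum, splitSum]

lemma blockSum_congr {w w' : List α → γ} {F F' : List γ → β} {l : List α}
    (hw : ∀ s, s ≠ [] → s.length ≤ l.length → w s = w' s)
    (hF : ∀ t, t.length ≤ l.length → F t = F' t) : blockSum w F l = blockSum w' F' l := by
  induction l using suffix_induction generalizing F F' with
  | nil => simpa only [blockSum_nil] using hF [] le_rfl
  | cons x xs ih =>
    simp only [blockSum_cons]
    refine splitSum_congr fun s q e => ?_
    have hlen : s.length + q.length = xs.length := by rw [← e, List.length_append]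
    rw [hw (x :: s) (List.cons_ne_nil _ _) (by simp; omega)]
    exact ih q ⟨s, e⟩ (fun r hr hrq => hw r hr (by simp; omega)) fun t ht => hF _ (by simp; omega)

lemma map_blockSum (h : β →+ β') (w : List α → γ) (F : List γ → β) (l : List α) :
    h (blockSum w F l) = blockSum w (fun t => h (F t)) l := by
  induction l using suffix_induction generalizing F with
  | nil => simp only [blockSum_nil]
  | cons x xs ih =>
    simp only [blockSum_cons, map_splitSum]
    exact splitSum_congr fun s q e => ih q ⟨s, e⟩ _

lemma blockSum_cons_eq_map (h : β →+ β') {w : List α → γ} {F : List γ → β} {F' : List γ → β'}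
    {x x' : α} (hF : ∀ s t, F' (w (x' :: s) :: t) = h (F (w (x :: s) :: t))) (l : List α) :
    blockSum w F' (x' :: l) = h (blockSum w F (x :: l)) := by
  simp only [blockSum_cons, map_splitSum, map_blockSum, hF]

lemma blockSum_zero (w : List α → γ) (l : List α) : blockSum w (fun _ => (0 : β)) l = 0 :=
  (map_blockSum (0 : β →+ β) w (fun _ => 0) l).symm

lemma blockSum_add (w : List α → γ) (F F' : List γ → β) (l : List α) :
    blockSum w (fun t => F t + F' t) l = blockSum w F l + blockSum w F' l := by
  induction l using suffix_induction generalizing F F' with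
  | nil => simp only [blockSum_nil]
  | cons x xs ih =>
    simp only [blockSum_cons, ← splitSum_add]
    exact splitSum_congr fun s q e => ih q ⟨s, e⟩ _ _

lemma blockSum_map {w : List α → γ} {w' : List α' → γ'} {f : α' → α} {g : γ' → γ}
    (h : ∀ s, s ≠ [] → w (s.map f) = g (w' s)) (F : List γ → β) (l : List α') :
    blockSum w F (l.map f) = blockSum w' (fun t => F (t.map g)) l := by
  induction l using suffix_induction generalizing F with
  | nil => simp only [List.map_nil, blockSum_nil]
  | cons x xs ih =>
    rw [List.map_cons, blockSum_cons, blockSum_cons, splitSum, splitSum, List.length_map]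
    refine Finset.sum_congr rfl fun k _ => ?_
    rw [← List.map_take, ← List.map_drop, ← List.map_cons, h _ (List.cons_ne_nil _ _),
      ih _ (List.drop_suffix k xs)]
    rfl

lemma blockSum_of_eq_comp {w : List α → γ} {w' : List α → γ'} {g : γ' → γ}
    (h : ∀ s, s ≠ [] → w s = g (w' s)) (F : List γ → β) (l : List α) :
    blockSum w F l = blockSum w' (fun t => F (t.map g)) l := by
  simpa only [List.map_id] using blockSum_map (f := id) (by simpa only [List.map_id] using h) F l

lemma blockSum_concat (w : List α → γ) (F : List γ → β) (p : List α) (y : α) :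
    blockSum w F (p ++ [y])
      = splitSum p fun s q => blockSum w (fun t => F (t ++ [w (q ++ [y])])) s := by
  induction p using suffix_induction generalizing F with
  | nil => simp [blockSum_cons, blockSum_nil, splitSum_nil]
  | cons x xs ih =>
    have hsuffix : ∀ s q, s ++ q = xs → blockSum w (fun t => F (w (x :: s) :: t)) (q ++ [y])
        = splitSum q fun r q' =>
            blockSum w (fun t => F (w (x :: s) :: (t ++ [w (q' ++ [y])]))) r :=
      fun s q e => ih q ⟨s, e⟩ _
    rw [List.cons_append, blockSum_cons, splitSum_append_cons, splitSum_congr hsuffix,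
      ← splitSum_assoc, splitSum_cons, splitSum_nil, add_comm]
    simp only [blockSum_nil, blockSum_cons, List.nil_append, List.cons_append]

lemma blockSum_concat_eq_zero {w : List α → γ} {F : List γ → β} {y : α}
    (h : ∀ t q, F (t ++ [w (q ++ [y])]) = 0) (p : List α) : blockSum w F (p ++ [y]) = 0 := by
  rw [blockSum_concat]
  exact splitSum_eq_zero fun s q _ => by simp only [h, blockSum_zero]

lemma blockSum_splitSum (w : List α → γ) (Φ : List γ → List γ → β) (l : List α) :
    blockSum w (fun t => splitSum t Φ) l
      = splitSum l fun p q => blockSum w (fun s => blockSum w (fun t => Φ s t) q) p := by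
  induction l using suffix_induction generalizing Φ with
  | nil => simp only [blockSum_nil, splitSum_nil]
  | cons x xs ih =>
    rw [splitSum_cons, blockSum_nil]
    simp only [blockSum_cons, splitSum_cons, blockSum_add, splitSum_add]
    rw [splitSum_assoc]
    exact congrArg _ (splitSum_congr fun s q e => ih q ⟨s, e⟩ _)

/-- `F` cut off to the lists of length less than `n`. -/
def truncate (n : ℕ) (F : List γ → β) (t : List γ) : β := if t.length < n then F t else 0

/-- The leading term is the factorization into singletons. -/
lemma blockSum_eq_add_truncate (w : List α → γ) (F : List γ → β) (l : List α) :
    blockSum w F l = F (l.map fun x => w [x]) + blockSum w (truncate l.length F) l := by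
  induction l using suffix_induction generalizing F with
  | nil => simp [blockSum_nil, truncate]
  | cons x xs ih =>
    have htruncate : ∀ c, (fun t => truncate (x :: xs).length F (c :: t))
        = truncate xs.length fun t => F (c :: t) := by
      intro c; funext t; simp [truncate]
    simp only [blockSum_cons, htruncate]
    cases xs with
    | nil => simp [splitSum_nil, blockSum_nil, truncate]
    | cons y ys =>
      rw [splitSum_cons, splitSum_cons, ih _ List.suffix_rfl, add_assoc]
      refine congrArg₂ _ rfl (congrArg₂ _ rfl (splitSum_congr fun s q e => ?_))
      refine blockSum_congr (fun _ _ _ => rfl) fun t ht => (if_pos ?_).symm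
      simp only [← e, List.length_cons, List.length_append]
      omega

lemma eq_of_blockSum_eq {w : List α → α} (hw : ∀ x, w [x] = x) {β : Type*} [AddCommGroup β]
    {F F' : List α → β} (h : ∀ l, blockSum w F l = blockSum w F' l) (l : List α) : F l = F' l := by
  induction hn : l.length using Nat.strong_induction_on generalizing l with
  | _ n ih =>
    have htruncate : truncate n F = truncate n F' := by
      funext t
      by_cases ht : t.length < n
      · simp only [truncate, if_pos ht, ih _ ht t rfl]
      · simp only [truncate, if_neg ht]
    have hl := h l
    rw [blockSum_eq_add_truncate, blockSum_eq_add_truncate w F', hn, htruncate] at hl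
    simpa [hw] using hl

end BlockSum

section SlotAdditive

variable {α γ δ β : Type*}

/-- Additivity of a function of lists in each entry, on lists of length less than `n`. -/
def SlotAdditiveBelow [Add γ] [Add β] (n : ℕ) (F : List γ → β) : Prop :=
  ∀ p u v q, p.length + q.length + 1 < n →
    F (p ++ (u + v) :: q) = F (p ++ u :: q) + F (p ++ v :: q)

/-- Additivity of a function of lists in each entry: on lists of each length it is multiadditive. -/
def SlotAdditive [Add γ] [Add β] (F : List γ → β) : Prop :=
  ∀ p u v q, F (p ++ (u + v) :: q) = F (p ++ u :: q) + F (p ++ v :: q)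

lemma SlotAdditive.below [Add γ] [Add β] {F : List γ → β} (hF : SlotAdditive F) (n : ℕ) :
    SlotAdditiveBelow n F :=
  fun p u v q _ => hF p u v q

lemma SlotAdditive.comp_cons [Add γ] [Add β] {F : List γ → β} (hF : SlotAdditive F) (c : γ) :
    SlotAdditive fun t => F (c :: t) :=
  fun p => hF (c :: p)

lemma SlotAdditiveBelow.mono [Add γ] [Add β] {n m : ℕ} {F : List γ → β}
    (hF : SlotAdditiveBelow n F) (hm : m ≤ n) : SlotAdditiveBelow m F :=
  fun p u v q h => hF p u v q (h.trans_le hm)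

lemma SlotAdditiveBelow.comp_cons [Add γ] [Add β] {n m : ℕ} {F : List γ → β}
    (hF : SlotAdditiveBelow n F) (c : γ) (hm : m < n) :
    SlotAdditiveBelow m fun t => F (c :: t) :=
  fun p u v q h => hF (c :: p) u v q (by simp; omega)

lemma SlotAdditiveBelow.truncate [Add γ] [AddCommMonoid β] {n : ℕ} {F : List γ → β}
    (hF : SlotAdditiveBelow n F) : SlotAdditive (truncate n F) := by
  intro p u v q
  by_cases h : p.length + (q.length + 1) < n
  · simp [OperatorValuedCumulants.truncate, h, hF p u v q (by omega)]
  · simp [OperatorValuedCumulants.truncate, h]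

/-- The block sum over `l` as an additive function of an entry put in front of the blocks. -/
def blockSumHead [AddCommGroup γ] [AddCommGroup β] (w : List α → γ) {F : List γ → β} {l : List α}
    (hF : SlotAdditiveBelow (l.length + 2) F) : γ →+ β :=
  AddMonoidHom.mk' (fun c => blockSum w (fun t => F (c :: t)) l) fun u v => by
    rw [← blockSum_add]
    exact blockSum_congr (fun _ _ _ => rfl) fun t ht => hF [] u v t (by simp; omega)

lemma SlotAdditive.blockSum [Add α] [AddCommMonoid γ] [AddCommMonoid β] {w : List α → γ}
    {F : List γ → β} (hw : SlotAdditive w) (hF : SlotAdditive F) :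
    SlotAdditive (blockSum w F) := by
  intro p u v q
  induction p using suffix_induction generalizing F with
  | nil =>
    simp only [List.nil_append, blockSum_cons, ← splitSum_add, ← blockSum_add]
    refine splitSum_congr fun s r _ => blockSum_congr (fun _ _ _ => rfl) fun t _ => ?_
    exact (congrArg (fun c => F (c :: t)) (hw [] u v s)).trans (hF [] _ _ t)
  | cons x xs ih =>
    simp only [List.cons_append, blockSum_cons, splitSum_append_cons]
    rw [add_add_add_comm, ← splitSum_add, ← splitSum_add]
    refine congrArg₂ _ (splitSum_congr fun s r e => ih r ⟨s, e⟩ (hF.comp_cons _))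
      (splitSum_congr fun s r _ => ?_)
    rw [← blockSum_add]
    refine blockSum_congr (fun _ _ _ => rfl) fun t _ => ?_
    exact (congrArg (fun c => F (c :: t)) (hw (x :: xs) u v s)).trans (hF [] _ _ t)

lemma blockSum_assoc [AddCommGroup δ] [AddCommGroup β] (w : List α → γ) (X : List γ → δ)
    {F : List δ → β} (hF : SlotAdditive F) (l : List α) :
    blockSum w (blockSum X F) l = blockSum (blockSum w X) F l := by
  induction l using suffix_induction generalizing F with
  | nil => simp only [blockSum_nil]
  | cons x xs ih =>
    simp only [blockSum_cons, blockSum_splitSum]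
    rw [← splitSum_assoc]
    refine splitSum_congr fun p r e => ?_
    have htail : ∀ c, blockSum w (blockSum X fun t => F (c :: t)) r
        = blockSum (blockSum w X) (fun t => F (c :: t)) r := fun c =>
      ih r ⟨p, e⟩ (hF.comp_cons c)
    let φ := blockSumHead (blockSum w X) (l := r) (hF.below _)
    trans φ (splitSum p fun s q => blockSum w (fun t => X (w (x :: s) :: t)) q)
    · simp only [map_splitSum, map_blockSum]
      exact splitSum_congr fun s q _ => congrArg (fun G => blockSum w G q) (funext fun t => htail _)
    · rfl

end SlotAdditive

section ActLast

variable {B γ : Type*} [Zero γ]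

/-- The product `m · I` of a series `m` with the identity series: `m` is evaluated at all entries
but the last, and its value acts on the last entry. The value at `[]` is junk. -/
def actLast (smul : B → γ → γ) (m : List γ → B) (l : List γ) : γ :=
  smul (m l.dropLast) (l.getLastD 0)

@[simp]
lemma actLast_concat (smul : B → γ → γ) (m : List γ → B) (p : List γ) (y : γ) :
    actLast smul m (p ++ [y]) = smul (m p) y := by
  rw [actLast, List.dropLast_concat, List.getLastD_concat]

lemma actLast_singleton (smul : B → γ → γ) (m : List γ → B) (y : γ) :
    actLast smul m [y] = smul (m []) y :=
  actLast_concat smul m [] y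

/-- `(n · I) ∘ (m · I) = (n ∘ (m · I)) · m · I`. -/
lemma blockSum_actLast_mul {B : Type*} [Ring B] (m n : List B → B) {l : List B} (hl : l ≠ []) :
    blockSum (actLast (· * ·) m) (actLast (· * ·) n) l
      = actLast (· * ·)
          (fun s => splitSum s fun p q => blockSum (actLast (· * ·) m) n p * m q) l := by
  obtain ⟨s, y, rfl⟩ := (List.eq_nil_or_concat' l).resolve_left hl
  simp only [blockSum_concat, actLast_concat]
  trans AddMonoidHom.mulRight y (splitSum s fun p q => blockSum (actLast (· * ·) m) n p * m q)
  · rw [map_splitSum]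
    refine splitSum_congr fun p q _ => ?_
    rw [AddMonoidHom.mulRight_apply, mul_assoc]
    exact (map_blockSum (AddMonoidHom.mulRight _) _ _ _).symm
  · rfl

end ActLast

section Trees

lemma size_of_mem_treesOfSize {n : ℕ} {τ : PBTree} (hτ : τ ∈ treesOfSize n) : τ.size = n := by
  induction n using Nat.strong_induction_on generalizing τ with
  | _ n ih =>
    cases n with
    | zero =>
      rw [treesOfSize, Finset.mem_singleton] at hτ
      rw [hτ, PBTree.size]
    | succ n =>
      rw [treesOfSize] at hτ
      simp only [Finset.mem_biUnion, Finset.mem_attach, true_and, Subtype.exists,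
        Finset.mem_image₂] at hτ
      obtain ⟨k, hk, σ, hσ, ρ, hρ, rfl⟩ := hτ
      have hkn := Finset.mem_range.mp hk
      rw [PBTree.size, ih k hkn hσ, ih (n - k) (by omega) hρ]
      omega

lemma exists_node_of_mem_treesOfSize_succ {n : ℕ} {τ : PBTree} (hτ : τ ∈ treesOfSize (n + 1)) :
    ∃ σ ρ, τ = .node σ ρ := by
  cases τ with
  | leaf => exact absurd (size_of_mem_treesOfSize hτ) (Nat.succ_ne_zero n).symm
  | node σ ρ => exact ⟨σ, ρ, rfl⟩

lemma sum_treesOfSize_succ {β : Type*} [AddCommMonoid β] (n : ℕ) (f : PBTree → β) :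
    ∑ τ ∈ treesOfSize (n + 1), f τ = ∑ k ∈ Finset.range (n + 1),
      ∑ σ ∈ treesOfSize k, ∑ ρ ∈ treesOfSize (n - k), f (.node σ ρ) := by
  rw [treesOfSize, Finset.sum_biUnion, ← Finset.sum_attach (Finset.range (n + 1))]
  · refine Finset.sum_congr rfl fun k _ => ?_
    rw [Finset.image₂, Finset.sum_image, Finset.sum_product]
    · rfl
    · rintro ⟨σ, ρ⟩ _ ⟨σ', ρ'⟩ _ h
      simpa using h
  · intro i _ j _ hij
    refine Finset.disjoint_left.mpr fun τ hi hj => hij (Subtype.ext ?_)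
    obtain ⟨σ, hσ, ρ, -, rfl⟩ := Finset.mem_image₂.mp hi
    obtain ⟨σ', hσ', ρ', -, h⟩ := Finset.mem_image₂.mp hj
    obtain ⟨rfl, -⟩ := PBTree.node.inj h
    exact (size_of_mem_treesOfSize hσ).symm.trans (size_of_mem_treesOfSize hσ')

/-- Each subtree of the right comb `τ` consumes a block of the argument list, so the sum over trees
becomes a sum over block decompositions, additivity of `F` collecting the trees over each block. -/
lemma sum_treesOfSize_eq_blockSum {α γ β : Type*} [AddCommGroup γ] [AddCommGroup β]
    {args : PBTree → List α → List γ} {w : PBTree → List α → γ} (hleaf : args .leaf [] = [])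
    (hnode : ∀ σ ρ s q, s.length = σ.size + 1 → args (.node σ ρ) (s ++ q) = w σ s :: args ρ q)
    {l : List α} {F : List γ → β} (hF : SlotAdditiveBelow l.length F) :
    ∑ τ ∈ treesOfSize l.length, F (args τ l)
      = blockSum (fun s => ∑ σ ∈ treesOfSize (s.length - 1), w σ s) F l := by
  induction l using suffix_induction generalizing F with
  | nil => rw [List.length_nil, treesOfSize, Finset.sum_singleton, hleaf, blockSum_nil]
  | cons x xs ih =>
    rw [List.length_cons, sum_treesOfSize_succ, blockSum_cons, splitSum]
    refine Finset.sum_congr rfl fun k hk => ?_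
    obtain ⟨s, q, rfl, rfl⟩ : ∃ s q, s ++ q = xs ∧ s.length = k :=
      ⟨xs.take k, xs.drop k, List.take_append_drop _ _,
        List.length_take_of_le (Nat.lt_succ_iff.mp (Finset.mem_range.mp hk))⟩
    rw [List.take_left, List.drop_left, List.length_append, Nat.add_sub_cancel_left]
    have hinner : ∀ σ ∈ treesOfSize s.length,
        ∑ ρ ∈ treesOfSize q.length, F (args (.node σ ρ) (x :: (s ++ q)))
          = blockSum (fun s => ∑ σ ∈ treesOfSize (s.length - 1), w σ s)
              (fun t => F (w σ (x :: s) :: t)) q := by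
      intro σ hσ
      rw [← ih q ⟨s, rfl⟩ (hF.comp_cons _ (by simp))]
      refine Finset.sum_congr rfl fun ρ _ => congrArg F (hnode σ ρ (x :: s) q ?_)
      rw [List.length_cons, size_of_mem_treesOfSize hσ]
    rw [Finset.sum_congr rfl hinner]
    cases s with
    | nil => simp [treesOfSize]
    | cons y s => exact (map_sum (blockSumHead _ (hF.mono (by simp))) _ _).symm

end Trees

section TreeEvaluation

lemma appG_ofFn {A B : Type u} (κ : ∀ n : ℕ, (Fin n → A) → B) (n : ℕ)
    (x : Fin n → A) : appG κ (List.ofFn x) = κ n x := by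
  have hcast {l : List A} (h : l.length = n) : appG κ l = κ n fun i => l.get (i.cast h.symm) := by
    subst h
    rfl
  rw [hcast List.length_ofFn]
  exact congrArg (κ n) (funext fun i => by simp)

lemma appG_comp {A A' B : Type u} (κ : ∀ n : ℕ, (Fin n → A) → B) (φ : A' → A) (t : List A') :
    appG (fun m y => κ m fun i => φ (y i)) t = appG κ (t.map φ) := by
  have hmap : t.map φ = List.ofFn fun i => φ (t.get i) := by apply List.ext_get <;> simp
  rw [hmap, appG_ofFn, appG]

variable {A B : Type u} [Ring A] [Ring B]

lemma argListG_node_append (smul : B → A → A) (f g : ∀ n : ℕ, (Fin n → A) → B) (σ ρ : PBTree)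
    (s q : List A) (hs : s.length = σ.size + 1) :
    argListG smul f g (.node σ ρ) (s ++ q)
      = actLast smul (treeEvalG smul g f σ) s :: argListG smul f g ρ q := by
  obtain ⟨p, y, rfl⟩ := List.eq_nil_or_concat' s |>.resolve_left (by rintro rfl; simp at hs)
  have hp : σ.size = p.length := by simpa using hs.symm
  rw [argListG, actLast_concat, hp]
  simp

lemma sum_treeEvalG_eq_sum_appG (smul : B → A → A) (f g : ∀ n : ℕ, (Fin n → A) → B) (n : ℕ)
    (l : List A) :
    ∑ τ ∈ treesOfSize (n + 1), treeEvalG smul f g τ l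
      = ∑ τ ∈ treesOfSize (n + 1), appG g (argListG smul f g τ l) := by
  refine Finset.sum_congr rfl fun τ hτ => ?_
  obtain ⟨σ, ρ, rfl⟩ := exists_node_of_mem_treesOfSize_succ hτ
  rw [treeEvalG]

end TreeEvaluation

section Cumulants

variable {A B : Type u} [Ring A] [Ring B] {ι : B →+* A} {E : A →+ B} {κ : ∀ n : ℕ, (Fin n → A) → B}

/-- The moment–cumulant relation, with the argument tuples written as lists. -/
def IsCumulantSeries (ι : B →+* A) (E : A →+ B) (κ : ∀ n : ℕ, (Fin n → A) → B) : Prop :=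
  ∀ l : List A,
    E l.prod = ∑ τ ∈ treesOfSize l.length, treeEvalG (fun b v => ι b * v) κ κ τ l

/-- The product `m · I` for the moment series `m` of `E`: a block `u₁, …, uₖ` contributes the
argument `E(u₁ ⋯ uₖ₋₁) uₖ` to the cumulant outside. -/
def momentBlock (ι : B →+* A) (E : A →+ B) : List A → A :=
  actLast (fun b v => ι b * v) fun s => E s.prod

lemma momentBlock_singleton (hE : E 1 = 1) (u : A) : momentBlock ι E [u] = u := by
  simp [momentBlock, actLast_singleton, hE]

lemma momentBlock_mul_cons (hE : E 1 = 1) (hEleft : ∀ x u, E (ι x * u) = x * E u) (x : B) (u : A)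
    (s : List A) : momentBlock ι E (ι x * u :: s) = ι x * momentBlock ι E (u :: s) := by
  rcases List.eq_nil_or_concat' s with rfl | ⟨p, y, rfl⟩
  · simp only [momentBlock_singleton hE]
  · rw [← List.cons_append, ← List.cons_append]
    simp only [momentBlock, actLast_concat, List.prod_cons, mul_assoc, hEleft, map_mul]

lemma slotAdditive_momentBlock (ι : B →+* A) (E : A →+ B) : SlotAdditive (momentBlock ι E) := by
  intro p u v q
  rcases List.eq_nil_or_concat' q with rfl | ⟨q, y, rfl⟩
  · simp only [momentBlock, actLast_concat, mul_add]
  · simp only [momentBlock, ← List.cons_append, ← List.append_assoc, actLast_concat,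
      List.prod_append, List.prod_cons, add_mul, mul_add, map_add]

lemma IsCumulantSeries.moment_eq_of_below (hκ : IsCumulantSeries ι E κ) {l : List A} (hl : l ≠ [])
    (hadd : SlotAdditiveBelow l.length (appG κ)) :
    E l.prod = blockSum (momentBlock ι E) (appG κ) l := by
  obtain ⟨x, xs, rfl⟩ := List.exists_cons_of_ne_nil hl
  rw [hκ, List.length_cons, sum_treeEvalG_eq_sum_appG, ← List.length_cons (a := x),
    sum_treesOfSize_eq_blockSum (by rw [argListG]) (argListG_node_append _ κ κ) hadd]
  refine blockSum_congr (fun s hs _ => ?_) fun _ _ => rfl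
  obtain ⟨p, y, rfl⟩ := (List.eq_nil_or_concat' s).resolve_left hs
  simp [momentBlock, hκ p, Finset.sum_mul]

lemma IsCumulantSeries.appG_eq_of_below (hκ : IsCumulantSeries ι E κ) (hE : E 1 = 1) {l : List A}
    (hl : l ≠ []) (hadd : SlotAdditiveBelow l.length (appG κ)) :
    appG κ l = E l.prod - blockSum (momentBlock ι E) (truncate l.length (appG κ)) l := by
  rw [hκ.moment_eq_of_below hl hadd, blockSum_eq_add_truncate]
  simp [momentBlock_singleton hE]

lemma IsCumulantSeries.slotAdditive (hκ : IsCumulantSeries ι E κ) (hE : E 1 = 1) :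
    SlotAdditive (appG κ) := by
  suffices ∀ n, SlotAdditiveBelow n (appG κ) from fun p u v q => this _ p u v q (Nat.lt_succ_self _)
  intro n
  induction n with
  | zero => exact fun p u v q h => absurd h (Nat.not_lt_zero _)
  | succ n ih =>
    intro p u v q hn
    have happG : ∀ w, appG κ (p ++ w :: q) = E (p ++ w :: q).prod
        - blockSum (momentBlock ι E) (truncate (p.length + q.length + 1) (appG κ)) (p ++ w :: q) :=
      fun w => by
        have hlen : (p ++ w :: q).length = p.length + q.length + 1 := by simp; omega
        rw [hκ.appG_eq_of_below hE (by simp) (ih.mono (by omega)), hlen]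
    have hblocks := (slotAdditive_momentBlock ι E).blockSum
      (ih.mono (Nat.lt_succ_iff.mp hn)).truncate
    simp only [happG, hblocks p u v q, List.prod_append, List.prod_cons, add_mul, mul_add, map_add]
    abel

lemma IsCumulantSeries.moment_eq (hκ : IsCumulantSeries ι E κ) (hE : E 1 = 1) {l : List A}
    (hl : l ≠ []) : E l.prod = blockSum (momentBlock ι E) (appG κ) l :=
  hκ.moment_eq_of_below hl ((hκ.slotAdditive hE).below _)

lemma IsCumulantSeries.appG_mul_cons (hκ : IsCumulantSeries ι E κ) (hE : E 1 = 1)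
    (hEleft : ∀ x u, E (ι x * u) = x * E u) (x : B) (u : A) (q : List A) :
    appG κ (ι x * u :: q) = x * appG κ (u :: q) := by
  induction hn : q.length using Nat.strong_induction_on generalizing u q with
  | _ n ih =>
    subst hn
    have happG : ∀ w, appG κ (w :: q) = E (w :: q).prod
        - blockSum (momentBlock ι E) (truncate (q.length + 1) (appG κ)) (w :: q) := fun w =>
      hκ.appG_eq_of_below hE (List.cons_ne_nil w q) ((hκ.slotAdditive hE).below _)
    have htruncate : ∀ s t,
        truncate (q.length + 1) (appG κ) (momentBlock ι E (ι x * u :: s) :: t)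
          = x * truncate (q.length + 1) (appG κ) (momentBlock ι E (u :: s) :: t) := by
      intro s t
      rw [momentBlock_mul_cons hE hEleft]
      by_cases ht : t.length < q.length
      · simp [truncate, ht, ih _ ht _ t rfl]
      · simp [truncate, ht]
    rw [happG, happG, mul_sub, List.prod_cons, List.prod_cons, mul_assoc, hEleft,
      blockSum_cons_eq_map (AddMonoidHom.mulLeft x) htruncate, AddMonoidHom.coe_mulLeft]

lemma IsCumulantSeries.moment_map_eq (hκ : IsCumulantSeries ι E κ) (hE : E 1 = 1) {γ : Type*}
    [Zero γ] {φ : γ → A} {smul : B → γ → γ} (hφ : ∀ x y, φ (smul x y) = ι x * φ y) {l : List γ}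
    (hl : l ≠ []) :
    E (l.map φ).prod
      = blockSum (actLast smul fun s => E (s.map φ).prod) (fun t => appG κ (t.map φ)) l := by
  rw [hκ.moment_eq hE (by simpa using hl)]
  refine blockSum_map (fun s hs => ?_) _ _
  obtain ⟨p, y, rfl⟩ := (List.eq_nil_or_concat' s).resolve_left hs
  simp [momentBlock, hφ]

end Cumulants

section FirstBlock

variable {γ B : Type*} [Ring B]

lemma splitSum_ite_mul (D : List γ → B) (l : List γ) :
    (splitSum l fun p r => (if p = [] then 1 else 0) * D r) = D l := by
  cases l with
  | nil => simp [splitSum_nil]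
  | cons x xs =>
    have htail : ∀ p q, p ++ q = xs → (if x :: p = [] then 1 else 0) * D q = 0 := fun p q _ => by
      rw [if_neg (List.cons_ne_nil x p), zero_mul]
    rw [splitSum_cons, splitSum_eq_zero htail, if_pos rfl, one_mul, add_zero]

lemma splitSum_mul_ite (D : List γ → B) (l : List γ) :
    (splitSum l fun p r => D p * if r = [] then 1 else 0) = D l := by
  induction l generalizing D with
  | nil => simp [splitSum_nil]
  | cons x xs ih => rw [splitSum_cons, ih fun p => D (x :: p)]; simp

/-- In the convolution algebra of series, `m = 1 + m D` and `m = 1 + D m` both say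
`m = (1 - D)⁻¹`. -/
lemma eq_add_splitSum_mul_of_eq {m D : List γ → B} (hD : D [] = 0)
    (hm : ∀ l, m l = (if l = [] then 1 else 0) + splitSum l fun p r => m p * D r) (l : List γ) :
    m l = (if l = [] then 1 else 0) + splitSum l fun p r => D p * m r := by
  induction hn : l.length using Nat.strong_induction_on generalizing l with
  | _ n ih =>
    have hshort : ∀ p r, p ++ r = l → m p * D r
        = (if p = [] then 1 else 0) * D r + splitSum p fun s q => D s * m q * D r := by
      rintro p r rfl
      cases r with
      | nil => simp [hD, splitSum_eq_zero]
      | cons y r =>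
        rw [ih p.length (by simp [← hn]) p rfl, add_mul]
        exact congrArg _ (map_splitSum (AddMonoidHom.mulRight _) _ _)
    have hexpand : ∀ s t, D s * m t
        = D s * (if t = [] then 1 else 0) + splitSum t fun q r => D s * m q * D r := by
      intro s t
      rw [hm t, mul_add]
      simp only [mul_assoc]
      exact congrArg _ (map_splitSum (AddMonoidHom.mulLeft (D s)) _ _)
    rw [hm l, splitSum_congr hshort, splitSum_congr fun s t _ => hexpand s t]
    simp only [splitSum_add, splitSum_ite_mul, splitSum_mul_ite, splitSum_assoc]

/-- Expansion of a moment along the block of its first letter, whereas the composition formula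
nests each block inside the next argument and thus singles out the block of the last letter. -/
lemma moment_cons_eq_splitSum [Zero γ] {smul : B → γ → γ} {M K : List γ → B} (hnil : M [] = 1)
    (hMK : ∀ l, l ≠ [] → M l = blockSum (actLast smul M) K l)
    (hK : ∀ x y t, K (smul x y :: t) = x * K (y :: t)) (y : γ) (l : List γ) :
    M (y :: l)
      = splitSum l fun p q => blockSum (actLast smul M) (fun t => K (y :: t)) p * M q := by
  let D : List γ → B
    | [] => 0
    | y :: q => blockSum (actLast smul M) (fun t => K (y :: t)) q
  have hlast : ∀ l, M l = (if l = [] then 1 else 0) + splitSum l fun p r => M p * D r := by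
    rintro (_ | ⟨x, xs⟩)
    · simp [splitSum_nil, hnil, D]
    · rw [if_neg (List.cons_ne_nil x xs), zero_add, hMK _ (List.cons_ne_nil x xs), blockSum_cons]
      refine (splitSum_shift x xs (Φ := fun s q =>
        blockSum (actLast smul M) (fun t => K (actLast smul M s :: t)) q)
        (fun p => mul_zero _) fun p z q => ?_).symm
      simp only [actLast_concat, hK]
      exact map_blockSum (AddMonoidHom.mulLeft (M p)) _ _ _
  rw [eq_add_splitSum_mul_of_eq rfl hlast, splitSum_cons]
  simp [D]

end FirstBlock

section Interleave

variable {α β γ : Type*}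

/-- The word `f₁ x₁, f₂ x₁, …, f₁ xₙ, f₂ xₙ`. -/
def interleave (f₁ f₂ : α → β) (xs : List α) : List β := xs.flatMap fun x => [f₁ x, f₂ x]

lemma interleave_nil (f₁ f₂ : α → β) : interleave f₁ f₂ [] = [] := rfl

lemma interleave_cons (f₁ f₂ : α → β) (x : α) (xs : List α) :
    interleave f₁ f₂ (x :: xs) = f₁ x :: f₂ x :: interleave f₁ f₂ xs := rfl

lemma interleave_append (f₁ f₂ : α → β) (xs ys : List α) :
    interleave f₁ f₂ (xs ++ ys) = interleave f₁ f₂ xs ++ interleave f₁ f₂ ys :=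
  List.flatMap_append

lemma length_interleave (f₁ f₂ : α → β) (xs : List α) :
    (interleave f₁ f₂ xs).length = 2 * xs.length := by
  simp [interleave, List.length_flatMap, mul_comm]

lemma cons_interleave (f : α → β) (c : β) (xs : List α) :
    c :: interleave f (fun _ => c) xs = interleave (fun _ => c) f xs ++ [c] := by
  induction xs with
  | nil => rfl
  | cons x xs ih => simp only [interleave_cons, ih, List.cons_append]

lemma interleave_const_cons (f : α → β) (c : β) (x : α) (xs : List α) :
    interleave f (fun _ => c) (x :: xs) = (f x :: interleave (fun _ => c) f xs) ++ [c] := by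
  rw [interleave_cons, cons_interleave, List.cons_append]

lemma interleave_const_concat (f : α → β) (c : β) (xs : List α) (y : α) :
    interleave (fun _ => c) f (xs ++ [y]) = (c :: interleave f (fun _ => c) xs) ++ [f y] := by
  rw [cons_interleave, interleave_append, List.append_assoc]
  rfl

lemma cons_interleave_eq_concat (f : α → β) (c : β) {x y : α} {xs ys : List α}
    (h : x :: xs = ys ++ [y]) :
    f x :: interleave (fun _ => c) f xs = interleave f (fun _ => c) ys ++ [f y] := by
  apply List.append_cancel_right (bs := [c])
  rw [← interleave_const_cons, h, interleave_append, List.append_assoc]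
  rfl

lemma exists_cons_interleave_eq_concat (f₁ f₂ : α → β) (y : α) (xs : List α) :
    ∃ p z, f₂ y :: interleave f₁ f₂ xs = p ++ [f₂ z] := by
  rcases List.eq_nil_or_concat' xs with rfl | ⟨p, z, rfl⟩
  · exact ⟨[], y, rfl⟩
  · exact ⟨f₂ y :: interleave f₁ f₂ p ++ [f₁ z], z, by simp [interleave]⟩

lemma splitSum_interleave [AddCommMonoid γ] (f₁ f₂ : α → β) {Φ : List β → List β → γ}
    (hodd : ∀ p y q, Φ (interleave f₁ f₂ p ++ [f₁ y]) (f₂ y :: interleave f₁ f₂ q) = 0)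
    (xs : List α) :
    splitSum (interleave f₁ f₂ xs) Φ
      = splitSum xs fun p q => Φ (interleave f₁ f₂ p) (interleave f₁ f₂ q) := by
  induction xs generalizing Φ with
  | nil => simp only [interleave_nil, splitSum_nil]
  | cons x xs ih =>
    have hsplit : Φ [f₁ x] (f₂ x :: interleave f₁ f₂ xs) = 0 := hodd [] x xs
    rw [interleave_cons, splitSum_cons, splitSum_cons, hsplit, zero_add,
      ih (Φ := fun p q => Φ (f₁ x :: f₂ x :: p) q) fun p => hodd (x :: p), splitSum_cons]
    rfl

end Interleave

section FreePair

variable {B : Type*}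

/-- The letter `x a`. -/
def letterA (x : B) : B × Fin 2 := (x, 0)

/-- The letter `x b`. -/
def letterB (x : B) : B × Fin 2 := (x, 1)

lemma snd_letterA_ne_snd_letterB (x y : B) : (letterA x).2 ≠ (letterB y).2 :=
  zero_ne_one

/-- `F` vanishes on words containing both colours, as mixed cumulants of a free pair do. -/
def VanishesOnMixed {β : Type*} [Zero β] (F : List (B × Fin 2) → β) : Prop :=
  ∀ t, ∀ y ∈ t, ∀ z ∈ t, y.2 ≠ z.2 → F t = 0

lemma VanishesOnMixed.comp_cons {β : Type*} [Zero β] {F : List (B × Fin 2) → β}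
    (hF : VanishesOnMixed F) (c : B × Fin 2) : VanishesOnMixed fun t => F (c :: t) :=
  fun t y hy z hz => hF (c :: t) y (List.mem_cons_of_mem c hy) z (List.mem_cons_of_mem c hz)

variable [Ring B]

/-- The coefficient ring acting on coloured letters: `(x, 0)` and `(x, 1)` stand for `x a` and
`x b`. -/
def letterSmul (x : B) (y : B × Fin 2) : B × Fin 2 := (x * y.1, y.2)

/-- The joint moment series `M` and cumulant series `K` of a free pair, as functions of words in the
coloured letters. -/
structure IsFreePair (M K : List (B × Fin 2) → B) : Prop where
  moment_nil : M [] = 1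
  moment_eq : ∀ l, l ≠ [] → M l = blockSum (actLast letterSmul M) K l
  cumulant_smul_cons : ∀ x y t, K (letterSmul x y :: t) = x * K (y :: t)
  cumulant_mixed : VanishesOnMixed K

section Pruning

variable {α β : Type*} [AddCommMonoid β] {M : List (B × Fin 2) → B} {F : List (B × Fin 2) → β}
  {f₁ f₂ : α → B × Fin 2}

lemma blockSum_concat_eq_zero_of_mixed (hF : VanishesOnMixed F) {c y : B × Fin 2} (hc : c.2 ≠ y.2)
    (p : List (B × Fin 2)) :
    blockSum (actLast letterSmul M) (fun t => F (c :: t)) (p ++ [y]) = 0 := by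
  refine blockSum_concat_eq_zero (fun t q => ?_) p
  rw [actLast_concat]
  exact hF _ c (by simp) (letterSmul (M q) y) (by simp) hc

lemma blockSum_cons_interleave_eq_zero (hF : VanishesOnMixed F) (p : List (B × Fin 2))
    (hc : ∀ x y, (f₁ x).2 ≠ (f₂ y).2) (x : α) (xs : List α) :
    blockSum (actLast letterSmul M) (fun t => F (actLast letterSmul M (p ++ [f₁ x]) :: t))
      (f₂ x :: interleave f₁ f₂ xs) = 0 := by
  obtain ⟨q, z, hq⟩ := exists_cons_interleave_eq_concat f₁ f₂ x xs
  rw [hq, actLast_concat]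
  exact blockSum_concat_eq_zero_of_mixed hF (c := letterSmul (M p) (f₁ x)) (hc x z) q

/-- In an alternating word, the blocks outside which only one colour is left must all have even
length: a last letter of the other colour would force a mixed cumulant. -/
lemma blockSum_interleave (hF : VanishesOnMixed F) (hc : ∀ x y, (f₁ x).2 ≠ (f₂ y).2)
    (xs : List α) :
    blockSum (actLast letterSmul M) F (interleave f₁ f₂ xs)
      = blockSum (fun s => actLast letterSmul M (interleave f₁ f₂ s)) F xs := by
  induction xs using suffix_induction generalizing F with
  | nil => simp only [interleave_nil, blockSum_nil]
  | cons x xs ih =>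
    have hfirst := blockSum_cons_interleave_eq_zero (M := M) hF [] hc x xs
    rw [List.nil_append] at hfirst
    rw [interleave_cons, blockSum_cons, splitSum_cons, hfirst, zero_add, splitSum_interleave,
      blockSum_cons]
    · exact splitSum_congr fun s q e => ih q ⟨s, e⟩ (hF.comp_cons _)
    · exact fun p => blockSum_cons_interleave_eq_zero (M := M) hF (_ :: _ :: interleave f₁ f₂ p) hc

lemma blockSum_cons_interleave (hF : VanishesOnMixed F) (hc : ∀ x y, (f₁ x).2 ≠ (f₂ y).2) (x : α)
    (xs : List α) :
    blockSum (actLast letterSmul M) F (f₂ x :: interleave f₁ f₂ xs)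
      = splitSum xs fun s q => blockSum (fun r => actLast letterSmul M (interleave f₁ f₂ r))
          (fun t => F (actLast letterSmul M (f₂ x :: interleave f₁ f₂ s) :: t)) q := by
  rw [blockSum_cons, splitSum_interleave]
  · exact splitSum_congr fun s q _ => blockSum_interleave (hF.comp_cons _) hc q
  · exact fun p => blockSum_cons_interleave_eq_zero (M := M) hF (_ :: interleave f₁ f₂ p) hc

end Pruning

/-- `E (x₁ a b ⋯ xₙ a b)`. -/
def momentAB (M : List (B × Fin 2) → B) (xs : List B) : B :=
  M (interleave letterA (fun _ => letterB 1) xs)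

/-- `E (x₁ a b ⋯ xₙ a)`, the last `b` being omitted. The value at `[]` is junk. -/
def momentABA (M : List (B × Fin 2) → B) : List B → B
  | [] => 0
  | x :: xs => M (letterA x :: interleave (fun _ => letterB 1) letterA xs)

/-- `E (b x₁ a b ⋯ xₙ a b)`. -/
def momentBAB (M : List (B × Fin 2) → B) (xs : List B) : B :=
  M (letterB 1 :: interleave letterA (fun _ => letterB 1) xs)

section AlternatingBlocks

variable {M : List (B × Fin 2) → B} {s : List B}

lemma actLast_interleave_left (hs : s ≠ []) :
    actLast letterSmul M (interleave letterA (fun _ => letterB 1) s)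
      = letterB (momentABA M s) := by
  obtain ⟨x, s, rfl⟩ := List.exists_cons_of_ne_nil hs
  rw [interleave_const_cons, actLast_concat]
  simp [letterSmul, letterB, momentABA]

lemma actLast_interleave_right (hs : s ≠ []) :
    actLast letterSmul M (interleave (fun _ => letterB 1) letterA s)
      = letterA (actLast (· * ·) (momentBAB M) s) := by
  obtain ⟨p, y, rfl⟩ := (List.eq_nil_or_concat' s).resolve_left hs
  rw [interleave_const_concat, actLast_concat, actLast_concat]
  rfl

lemma actLast_cons_interleave_right (x : B) (s : List B) :
    actLast letterSmul M (letterA x :: interleave (fun _ => letterB 1) letterA s)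
      = letterA (actLast (· * ·) (momentAB M) (x :: s)) := by
  obtain ⟨p, y, h⟩ := (List.eq_nil_or_concat' (x :: s)).resolve_left (List.cons_ne_nil x s)
  rw [cons_interleave_eq_concat _ _ h, h, actLast_concat, actLast_concat]
  rfl

end AlternatingBlocks

/-- The recursion satisfied by the alternating tree sums of `f ⊠ g`: the sums `N` have a leading
argument `1` in front of `x₁, 1, …, xₙ, 1`, and the sums `Q` end in `xₙ`. It makes
`f ⊠ g = g ∘ Q`. -/
structure IsBoxedRecursion (f g N Q : List B → B) : Prop where
  outer_eq : ∀ xs, N xs = blockSum Q (fun t => g (1 :: t)) xs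
  inner_eq : ∀ z t, Q (z :: t) = blockSum (actLast (· * ·) N) (fun r => f (z :: r)) t

namespace IsFreePair

variable {M K : List (B × Fin 2) → B}

lemma momentAB_eq (h : IsFreePair M K) {xs : List B} (hxs : xs ≠ []) :
    momentAB M xs = blockSum (momentABA M) (fun t => K (t.map letterB)) xs := by
  obtain ⟨x, xs, rfl⟩ := List.exists_cons_of_ne_nil hxs
  rw [momentAB, h.moment_eq _ (by simp [interleave_cons]),
    blockSum_interleave h.cumulant_mixed fun x _ => snd_letterA_ne_snd_letterB x 1]
  exact blockSum_of_eq_comp (fun _ => actLast_interleave_left) K _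

lemma momentABA_cons (h : IsFreePair M K) (x : B) (xs : List B) :
    momentABA M (x :: xs) = splitSum xs fun s q =>
      blockSum (actLast (· * ·) (momentBAB M))
        (fun t => K ((actLast (· * ·) (momentAB M) (x :: s) :: t).map letterA)) q := by
  rw [momentABA, h.moment_eq _ (List.cons_ne_nil _ _),
    blockSum_cons_interleave h.cumulant_mixed fun _ y => (snd_letterA_ne_snd_letterB y 1).symm]
  refine splitSum_congr fun s q _ => ?_
  rw [actLast_cons_interleave_right]
  exact blockSum_of_eq_comp (fun _ => actLast_interleave_right) _ _

lemma momentBAB_eq (h : IsFreePair M K) (xs : List B) :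
    momentBAB M xs = splitSum xs fun p q =>
      blockSum (momentABA M) (fun t => K ((1 :: t).map letterB)) p * momentAB M q := by
  rw [momentBAB, moment_cons_eq_splitSum h.moment_nil h.moment_eq h.cumulant_smul_cons,
    splitSum_interleave]
  · refine splitSum_congr fun p q _ => congrArg (· * _) ?_
    rw [blockSum_interleave (h.cumulant_mixed.comp_cons _)
      fun x _ => snd_letterA_ne_snd_letterB x 1]
    exact blockSum_of_eq_comp (fun _ => actLast_interleave_left) _ _
  · intro p y q
    rw [blockSum_concat_eq_zero_of_mixed h.cumulant_mixed (snd_letterA_ne_snd_letterB y 1).symm,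
      zero_mul]

lemma momentABA_eq_blockSum (h : IsFreePair M K) {N Q : List B → B}
    (hA : SlotAdditive fun t => K (t.map letterA)) (hB : SlotAdditive fun t => K (t.map letterB))
    (hNQ : IsBoxedRecursion (fun t => K (t.map letterA)) (fun t => K (t.map letterB)) N Q)
    {xs : List B} (hxs : xs ≠ []) :
    momentABA M xs = blockSum (actLast (· * ·) (momentAB M)) Q xs := by
  induction hn : xs.length using Nat.strong_induction_on generalizing xs with
  | _ n ih =>
    subst hn
    obtain ⟨x, xs, rfl⟩ := List.exists_cons_of_ne_nil hxs
    have hN : ∀ s, s.length ≤ xs.length → blockSum (actLast (· * ·) (momentAB M)) N s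
        = blockSum (momentABA M) (fun t => K ((1 :: t).map letterB)) s := by
      intro s hs
      rw [funext hNQ.outer_eq, blockSum_assoc _ _ (hB.comp_cons 1)]
      refine blockSum_congr (fun r hr hrs => ?_) fun _ _ => rfl
      exact (ih r.length (by simp; omega) hr rfl).symm
    have hblock : ∀ s, s ≠ [] → s.length ≤ xs.length →
        blockSum (actLast (· * ·) (momentAB M)) (actLast (· * ·) N) s
          = actLast (· * ·) (momentBAB M) s := by
      intro s hs hlen
      rw [blockSum_actLast_mul _ _ hs, actLast, actLast, h.momentBAB_eq]
      refine congrArg (· * _) (splitSum_congr fun p q e => congrArg (· * _) (hN p ?_))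
      have hpq := congrArg List.length e
      simp only [List.length_append, List.length_dropLast] at hpq
      omega
    rw [h.momentABA_cons, blockSum_cons]
    refine splitSum_congr fun s q e => ?_
    simp only [hNQ.inner_eq]
    have hq : q.length ≤ xs.length := (List.IsSuffix.length_le ⟨s, e⟩)
    rw [blockSum_assoc _ _ (hA.comp_cons _)]
    exact blockSum_congr (fun r hr hrq => (hblock r hr (hrq.trans hq)).symm) fun _ _ => rfl

lemma momentAB_eq_blockSum_blockSum (h : IsFreePair M K) {N Q : List B → B}
    (hA : SlotAdditive fun t => K (t.map letterA)) (hB : SlotAdditive fun t => K (t.map letterB))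
    (hNQ : IsBoxedRecursion (fun t => K (t.map letterA)) (fun t => K (t.map letterB)) N Q)
    {xs : List B} (hxs : xs ≠ []) :
    momentAB M xs = blockSum (actLast (· * ·) (momentAB M))
      (blockSum Q fun t => K (t.map letterB)) xs := by
  rw [h.momentAB_eq hxs, blockSum_assoc _ _ hB]
  exact blockSum_congr (fun _ hs _ => h.momentABA_eq_blockSum hA hB hNQ hs) fun _ _ => rfl

end IsFreePair

end FreePair

section BoxedConvolution

variable {B : Type u} [Ring B] (f g : ∀ n : ℕ, (Fin n → B) → B)

lemma size_R (τ : PBTree) : τ.R.size = 2 * τ.size := by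
  induction τ with
  | leaf => rfl
  | node σ ρ hσ hρ => simp only [PBTree.R, PBTree.size, hσ, hρ]; omega

lemma treeEvalG_node_leaf (τ : PBTree) (x : B) (l : List B) :
    treeEvalG (· * ·) f g (.node .leaf τ) (x :: l)
      = appG g (x :: argListG (· * ·) f g τ l) := by
  rw [treeEvalG, argListG, treeEvalG]
  simp [PBTree.size]

/-- Doubling the vertices doubles the length of every block of arguments. -/
lemma sum_argListG_R_eq_blockSum (f₁ f₂ : B → B) {F : List B → B} (hF : SlotAdditive F)
    (l : List B) :
    ∑ τ ∈ treesOfSize l.length, F (argListG (· * ·) f g τ.R (interleave f₁ f₂ l))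
      = blockSum (fun s => ∑ σ ∈ treesOfSize (s.length - 1),
          actLast (· * ·) (treeEvalG (· * ·) g f (.node .leaf σ.R)) (interleave f₁ f₂ s)) F l := by
  refine sum_treesOfSize_eq_blockSum
    (args := fun τ l => argListG (· * ·) f g τ.R (interleave f₁ f₂ l)) ?_ (fun σ ρ s q hs => ?_)
    (hF.below _)
  · rw [PBTree.R, argListG]
  · rw [interleave_append, PBTree.R, argListG_node_append]
    rw [length_interleave, hs, PBTree.size, PBTree.size, size_R]
    omega

/-- `∑ (f ∪ g)_{| ∨ R σ}(1, x₁, 1, …, xₙ, 1)`. -/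
def boxedOuter (xs : List B) : B :=
  ∑ σ ∈ treesOfSize xs.length,
    treeEvalG (· * ·) f g (.node .leaf σ.R) (1 :: interleave id (fun _ => 1) xs)

/-- `∑ (g ∪ f)_{| ∨ R σ}(x₁, 1, x₂, …, 1, xₙ)`. The value at `[]` is junk. -/
def boxedInner : List B → B
  | [] => 0
  | x :: xs => ∑ σ ∈ treesOfSize xs.length,
      treeEvalG (· * ·) g f (.node .leaf σ.R) (x :: interleave (fun _ => 1) id xs)

variable {f g}

lemma sum_argListG_R_eq_blockSum_boxedInner {F : List B → B} (hF : SlotAdditive F) (xs : List B) :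
    ∑ τ ∈ treesOfSize xs.length, F (argListG (· * ·) f g τ.R (interleave id (fun _ => 1) xs))
      = blockSum (boxedInner f g) F xs := by
  rw [sum_argListG_R_eq_blockSum f g _ _ hF]
  refine blockSum_congr (fun s hs _ => ?_) fun _ _ => rfl
  obtain ⟨x, s, rfl⟩ := List.exists_cons_of_ne_nil hs
  simp only [interleave_const_cons, actLast_concat, mul_one]
  rfl

lemma isBoxedRecursion_boxedOuter_boxedInner (hf : SlotAdditive (appG f))
    (hg : SlotAdditive (appG g)) :
    IsBoxedRecursion (appG f) (appG g) (boxedOuter f g) (boxedInner f g) where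
  outer_eq xs := by
    simp only [boxedOuter, treeEvalG_node_leaf]
    exact sum_argListG_R_eq_blockSum_boxedInner (hg.comp_cons 1) xs
  inner_eq x xs := by
    simp only [boxedInner, treeEvalG_node_leaf]
    rw [sum_argListG_R_eq_blockSum g f _ _ (hf.comp_cons x)]
    refine blockSum_congr (fun s hs _ => ?_) fun _ _ => rfl
    obtain ⟨p, y, rfl⟩ := (List.eq_nil_or_concat' s).resolve_left hs
    simp only [interleave_const_concat, actLast_concat, boxedOuter, Finset.sum_mul,
      List.length_append, List.length_singleton, Nat.add_sub_cancel, id]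

lemma foldr_eq_interleave (xs : List B) :
    xs.foldr (fun v acc => v :: (1 : B) :: acc) [] = interleave id (fun _ => 1) xs := by
  induction xs with
  | nil => rfl
  | cons x xs ih => rw [List.foldr_cons, ih]; rfl

lemma sum_treeEvalG_R_eq_blockSum (hg : SlotAdditive (appG g)) {xs : List B} (hxs : xs ≠ []) :
    ∑ τ ∈ treesOfSize xs.length,
        treeEvalG (· * ·) f g τ.R (xs.foldr (fun v acc => v :: (1 : B) :: acc) [])
      = blockSum (boxedInner f g) (appG g) xs := by
  rw [← sum_argListG_R_eq_blockSum_boxedInner hg, foldr_eq_interleave]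
  obtain ⟨x, xs, rfl⟩ := List.exists_cons_of_ne_nil hxs
  refine Finset.sum_congr rfl fun τ hτ => ?_
  obtain ⟨σ, ρ, rfl⟩ := exists_node_of_mem_treesOfSize_succ hτ
  rw [PBTree.R, treeEvalG]

end BoxedConvolution

section FreeElements

variable {A B : Type u} [Ring A] [Ring B] {ι : B →+* A} {E : A →+ B} {κ : ∀ n : ℕ, (Fin n → A) → B}

/-- The element of `A` denoted by a coloured letter. -/
def letterEval (ι : B →+* A) (a b : A) (y : B × Fin 2) : A := ι y.1 * ![a, b] y.2

lemma letterEval_letterSmul (a b : A) (x : B) (y : B × Fin 2) :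
    letterEval ι a b (letterSmul x y) = ι x * letterEval ι a b y := by
  simp [letterEval, letterSmul, mul_assoc]

/-- Freeness of `a` and `b`: the cumulants at `c₀, x₁ c₁, …, xₙ cₙ` with all `cᵢ ∈ {a, b}` vanish
unless the `cᵢ` are all equal. -/
def MixedCumulantsVanish (ι : B →+* A) (κ : ∀ n : ℕ, (Fin n → A) → B) (a b : A) : Prop :=
  ∀ (n : ℕ) (c : Fin (n + 1) → A) (x : Fin n → B),
    (∀ i, c i = a ∨ c i = b) → (∃ i, c i = a) → (∃ j, c j = b) →
    κ (n + 1) (Fin.cons (c 0) fun i : Fin n => ι (x i) * c i.succ) = 0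

lemma appG_map_letterEval_eq_zero (hκ : IsCumulantSeries ι E κ) (hE : E 1 = 1)
    (hEleft : ∀ x u, E (ι x * u) = x * E u) {a b : A} (hfree : MixedCumulantsVanish ι κ a b)
    {l : List (B × Fin 2)} (ha : ∃ y ∈ l, y.2 = 0) (hb : ∃ y ∈ l, y.2 = 1) :
    appG κ (l.map (letterEval ι a b)) = 0 := by
  obtain ⟨y, t, rfl⟩ : ∃ y t, l = y :: t :=
    List.exists_cons_of_ne_nil (List.ne_nil_of_mem ha.choose_spec.1)
  let c : Fin (t.length + 1) → A := fun i => ![a, b] ((y :: t).get i).2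
  have hcolor : ∀ k : Fin 2, (∃ z ∈ y :: t, z.2 = k) → ∃ i, c i = ![a, b] k := by
    rintro k ⟨z, hz, rfl⟩
    obtain ⟨i, rfl⟩ := List.get_of_mem hz
    exact ⟨i, rfl⟩
  have hc : ∀ i, c i = a ∨ c i = b := fun i => by
    have hk : ∀ k : Fin 2, ![a, b] k = a ∨ ![a, b] k = b := by simp [Fin.forall_fin_two]
    exact hk _
  have hword : c 0 :: t.map (letterEval ι a b)
      = List.ofFn (Fin.cons (c 0) fun i : Fin t.length => ι (t.get i).1 * c i.succ :
          Fin (t.length + 1) → A) := by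
    rw [List.ofFn_succ]
    refine congrArg₂ _ rfl (List.ext_get (by simp) fun i hi hi' => ?_)
    simp [letterEval, c]
  rw [List.map_cons, letterEval, hκ.appG_mul_cons hE hEleft]
  change y.1 * appG κ (c 0 :: _) = 0
  rw [hword, appG_ofFn, hfree _ c _ hc (hcolor 0 ha) (hcolor 1 hb), mul_zero]

lemma isFreePair_of_mixedCumulantsVanish (hκ : IsCumulantSeries ι E κ) (hE : E 1 = 1)
    (hEleft : ∀ x u, E (ι x * u) = x * E u) {a b : A} (hfree : MixedCumulantsVanish ι κ a b) :
    IsFreePair (fun l => E (l.map (letterEval ι a b)).prod)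
      (fun t => appG κ (t.map (letterEval ι a b))) where
  moment_nil := by simpa using hE
  moment_eq l hl := hκ.moment_map_eq hE (letterEval_letterSmul a b) hl
  cumulant_smul_cons x y t := by
    rw [List.map_cons, letterEval_letterSmul, hκ.appG_mul_cons hE hEleft, List.map_cons]
  cumulant_mixed t y hy z hz hyz := by
    obtain ⟨hy0, hz1⟩ | ⟨hy1, hz0⟩ : y.2 = 0 ∧ z.2 = 1 ∨ y.2 = 1 ∧ z.2 = 0 := by omega
    · exact appG_map_letterEval_eq_zero hκ hE hEleft hfree ⟨y, hy, hy0⟩ ⟨z, hz, hz1⟩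
    · exact appG_map_letterEval_eq_zero hκ hE hEleft hfree ⟨z, hz, hz0⟩ ⟨y, hy, hy1⟩

lemma prod_map_letterEval_interleave (ι : B →+* A) (a b : A) (xs : List B) :
    ((interleave letterA (fun _ => letterB 1) xs).map (letterEval ι a b)).prod
      = (xs.map fun x => ι x * (a * b)).prod := by
  induction xs with
  | nil => rfl
  | cons x xs ih =>
    rw [interleave_cons, List.map_cons, List.map_cons, List.prod_cons, List.prod_cons, ih,
      List.map_cons, List.prod_cons]
    simp [letterEval, letterA, letterB, mul_assoc]

/-- The series `k^c` of cumulants of `c` with coefficients in `B`. -/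
def cumulantSeries (ι : B →+* A) (κ : ∀ n : ℕ, (Fin n → A) → B) (c : A) :
    ∀ n : ℕ, (Fin n → B) → B :=
  fun n x => κ n fun i => ι (x i) * c

lemma appG_cumulantSeries (c : A) (t : List B) :
    appG (cumulantSeries ι κ c) t = appG κ (t.map fun x => ι x * c) :=
  appG_comp κ (fun x => ι x * c) t

lemma appG_map_letterA (a b : A) (t : List B) :
    appG κ ((t.map letterA).map (letterEval ι a b)) = appG (cumulantSeries ι κ a) t := by
  rw [appG_cumulantSeries, List.map_map]
  rfl

lemma appG_map_letterB (a b : A) (t : List B) :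
    appG κ ((t.map letterB).map (letterEval ι a b)) = appG (cumulantSeries ι κ b) t := by
  rw [appG_cumulantSeries, List.map_map]
  rfl

lemma SlotAdditive.cumulantSeries (hκ : SlotAdditive (appG κ)) (c : A) :
    SlotAdditive (appG (cumulantSeries ι κ c)) := by
  intro p u v q
  simp only [appG_cumulantSeries, List.map_append, List.map_cons, map_add, add_mul, hκ _ _ _ _]

/-- Both sides have the same composition with `E (x₁ a b ⋯ xₖ₋₁ a b) xₖ`, namely the moments of
`a b`. -/
lemma appG_cumulantSeries_mul (hκ : IsCumulantSeries ι E κ) (hE : E 1 = 1)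
    (hEleft : ∀ x u, E (ι x * u) = x * E u) {a b : A} (hfree : MixedCumulantsVanish ι κ a b)
    (xs : List B) :
    appG (cumulantSeries ι κ (a * b)) xs
      = blockSum (boxedInner (cumulantSeries ι κ a) (cumulantSeries ι κ b))
          (appG (cumulantSeries ι κ b)) xs := by
  let M : List (B × Fin 2) → B := fun l => E (l.map (letterEval ι a b)).prod
  have hM : momentAB M = fun xs => E (xs.map fun x => ι x * (a * b)).prod :=
    funext fun xs => congrArg E (prod_map_letterEval_interleave ι a b xs)
  have hA := funext (appG_map_letterA (ι := ι) (κ := κ) a b)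
  have hB := funext (appG_map_letterB (ι := ι) (κ := κ) a b)
  have haddA := (hκ.slotAdditive hE).cumulantSeries (ι := ι) a
  have haddB := (hκ.slotAdditive hE).cumulantSeries (ι := ι) b
  have hrec := isBoxedRecursion_boxedOuter_boxedInner haddA haddB
  refine eq_of_blockSum_eq (w := actLast (· * ·) (momentAB M)) (fun x => ?_) (fun l => ?_) xs
  · rw [actLast_singleton, hM]
    simp [hE]
  · rcases eq_or_ne l [] with rfl | hl
    · simp only [blockSum_nil, appG_cumulantSeries, List.map_nil]
    · have hfreePair := isFreePair_of_mixedCumulantsVanish hκ hE hEleft hfree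
      have hmoment := hfreePair.momentAB_eq_blockSum_blockSum (hA ▸ haddA) (hB ▸ haddB)
        (hA ▸ hB ▸ hrec) hl
      rw [← hB, ← hmoment, funext (appG_cumulantSeries (a * b))]
      refine ((congrFun hM l).trans ?_).symm
      rw [hM]
      exact hκ.moment_map_eq hE (fun x y => by rw [map_mul, mul_assoc]) hl

end FreeElements

end OperatorValuedCumulants

open OperatorValuedCumulants in
theorem cumulants_of_product_of_free_general {A B : Type u} [Ring A] [Ring B]
    (ι : B →+* A) (E : A →+ B)
    (hE1 : E 1 = 1)
    (hEleft : ∀ (x : B) (u : A), E (ι x * u) = x * E u)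
    (κ : ∀ n : ℕ, (Fin n → A) → B)
    (hmc : ∀ (n : ℕ) (u : Fin n → A),
      E (List.ofFn u).prod
        = ∑ τ ∈ treesOfSize n, treeEvalG (fun b v => ι b * v) κ κ τ (List.ofFn u))
    (a b : A) (hfree : MixedCumulantsVanish ι κ a b) (n : ℕ) (x : Fin (n + 1) → B) :
    κ (n + 1) (fun i => ι (x i) * (a * b))
      = ∑ τ ∈ treesOfSize (n + 1),
          treeEvalG (· * ·) (cumulantSeries ι κ a) (cumulantSeries ι κ b) τ.R
            ((List.ofFn x).foldr (fun v acc => v :: (1 : B) :: acc) []) := by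
  have hκ : IsCumulantSeries ι E κ := fun l => by
    simpa only [List.ofFn_get] using hmc l.length l.get
  have hadd := (hκ.slotAdditive hE1).cumulantSeries (ι := ι) b
  have hne : List.ofFn x ≠ [] := by simp
  have hboxed := sum_treeEvalG_R_eq_blockSum (f := cumulantSeries ι κ a) hadd hne
  rw [List.length_ofFn] at hboxed
  rw [hboxed, ← appG_cumulantSeries_mul hκ hE1 hEleft hfree, appG_ofFn]
  rfl

/-- Operator-valued cumulants of a product of two free random variables:
`k^{ab} = k^a ⊠ k^b`, i.e. for all `n ≥ 1`,
`k^{ab}_n(x₁,…,xₙ) = ∑_{τ ∈ Y_n} (k^a ∪ k^b)_{R(τ)}(x₁, 1, x₂, 1, …, 1, xₙ, 1)`. -/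
theorem cumulants_of_product_of_free {A B : Type u} [Ring A] [Ring B]
    (ι : B →+* A) (E : A → B)
    (hE1 : E 1 = 1)
    (hEadd : ∀ u v : A, E (u + v) = E u + E v)
    (hEbal : ∀ (x y : B) (u : A), E (ι x * u * ι y) = x * E u * y)
    (κ : ∀ n : ℕ, (Fin n → A) → B)
    (hmc : ∀ (n : ℕ) (u : Fin n → A),
      E (List.ofFn u).prod
        = ∑ τ ∈ treesOfSize n, treeEvalG (fun b v => ι b * v) κ κ τ (List.ofFn u))
    (a b : A)
    (hfree : ∀ (n : ℕ) (c : Fin (n + 1) → A) (x : Fin n → B),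
      (∀ i, c i = a ∨ c i = b) → (∃ i, c i = a) → (∃ j, c j = b) →
      κ (n + 1) (Fin.cons (c 0) fun i : Fin n => ι (x i) * c i.succ) = 0) :
    ∀ (n : ℕ) (x : Fin (n + 1) → B),
      κ (n + 1) (fun i => ι (x i) * (a * b))
        = ∑ τ ∈ treesOfSize (n + 1),
            treeEvalG (fun u v : B => u * v)
              (fun m y => κ m fun i => ι (y i) * a)
              (fun m y => κ m fun i => ι (y i) * b)
              τ.R ((List.ofFn x).foldr (fun v acc => v :: (1 : B) :: acc) []) := by
  exact cumulants_of_product_of_free_general ι (AddMonoidHom.mk' E hEadd) hE1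
    (fun x u => by simpa using hEbal x 1 u) κ hmc a b hfree
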